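/- Fix half-bandwidths W⁰, W¹ ∈ (0, 1/2), let 𝕎 = [−W⁰, W⁰] × [−W¹, W¹], and fix ε ∈ (0, 1). Then there exist constants C̄₁ > 0, C̄₂ > 0 and integers M̄₁, N̄₁ ≥ 1 (depending only on W⁰, W¹ and ε) such that for all M ≥ M̄₁, N ≥ N̄₁ and every index p with 0 ≤ p ≤ ⌊4MN·W⁰·W¹·(1−ε)⌋, the p-th eigenvalue satisfies 1 − λ_{(M,N),𝕎}^{(p)} ≤ C̄₁·e^{−C̄₂·min(M,N)}. -/

import Mathlib

open MeasureTheory Matrix Real Set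

/-- The 2-D prolate matrix `B_{(M,N),𝕎}`, indexed by pairs, with entries
`∫_𝕎 exp(2πi (f (m−p) + g (n−q))) df dg`. -/
noncomputable def prolate2D (M N : ℕ) (𝕎 : Set (ℝ × ℝ)) :
    Matrix (Fin M × Fin N) (Fin M × Fin N) ℂ :=
  fun i j => ∫ fg in 𝕎,
    Complex.exp (2 * (Real.pi : ℂ) * Complex.I *
      ((fg.1 : ℂ) * (((i.1 : ℕ) : ℂ) - ((j.1 : ℕ) : ℂ)) +
       (fg.2 : ℂ) * (((i.2 : ℕ) : ℂ) - ((j.2 : ℕ) : ℂ))))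

/-- Counting lemma (one half of Courant–Fischer). -/
lemma count_eig {n ι : Type*} [Fintype n] [DecidableEq n] [Fintype ι] {A : Matrix n n ℂ}
    (hA : A.IsHermitian) (t : ℝ) (T : (ι → ℂ) →ₗ[ℂ] (n → ℂ)) (hT : Function.Injective T)
    (h : ∀ c, t * ∑ i, ‖T c i‖ ^ 2 ≤ (star (T c) ⬝ᵥ A *ᵥ T c).re) :
    Fintype.card ι ≤ Fintype.card {i // t ≤ hA.eigenvalues i} := by
  set U : Matrix n n ℂ := (hA.eigenvectorUnitary : Matrix n n ℂ) with hU
  have hUU : U * Uᴴ = 1 := by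
    have := Unitary.coe_mul_star_self hA.eigenvectorUnitary
    simpa [star_eq_conjTranspose] using this
  have hA' : A = U * diagonal (fun i => (hA.eigenvalues i : ℂ)) * Uᴴ := by
    have := hA.spectral_theorem
    rw [Unitary.conjStarAlgAut_apply] at this
    exact this
  have hn (y : n → ℂ) : (star y ⬝ᵥ y) = ((∑ i, ‖y i‖ ^ 2 : ℝ) : ℂ) := by
    simp only [dotProduct, Pi.star_apply, RCLike.star_def, Complex.conj_mul']
    push_cast; rfl
  clear_value U
  generalize hA.eigenvalues = d at hA' ⊢
  let S : (ι → ℂ) →ₗ[ℂ] ({i // t ≤ d i} → ℂ) :=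
    (LinearMap.funLeft ℂ ℂ (Subtype.val)) ∘ₗ (Matrix.mulVecLin Uᴴ) ∘ₗ T
  have hS : Function.Injective S := by
    rw [← LinearMap.ker_eq_bot, LinearMap.ker_eq_bot']
    intro c hc
    set x := T c with hx
    set y := Uᴴ *ᵥ x with hy
    have hxy : x = U *ᵥ y := by rw [hy, mulVec_mulVec, hUU, one_mulVec]
    have hy0 : ∀ i, t ≤ d i → y i = 0 := fun i hi => congrFun hc ⟨i, hi⟩
    have hstar : star x ᵥ* U = star y := by
      rw [hy, star_mulVec, conjTranspose_conjTranspose]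
    have e1 : (star x ⬝ᵥ A *ᵥ x) = ((∑ i, d i * ‖y i‖ ^ 2 : ℝ) : ℂ) := by
      rw [hA', ← mulVec_mulVec, ← mulVec_mulVec, dotProduct_mulVec, hstar, ← hy]
      simp only [dotProduct, Pi.star_apply, RCLike.star_def, mulVec_diagonal]
      push_cast
      refine Finset.sum_congr rfl fun i _ => ?_
      rw [← Complex.conj_mul']; ring
    have e2 : ∑ i, ‖x i‖ ^ 2 = ∑ i, ‖y i‖ ^ 2 := by
      have : (star x ⬝ᵥ x) = star y ⬝ᵥ y := by
        conv_lhs => rw [hxy, dotProduct_mulVec, ← hxy, hstar]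
      rw [hn, hn] at this
      exact_mod_cast this
    have h1 := h c
    rw [← hx, e1, e2, Complex.ofReal_re, Finset.mul_sum] at h1
    have h2 : ∀ i ∈ Finset.univ, d i * ‖y i‖ ^ 2 ≤ t * ‖y i‖ ^ 2 := by
      intro i _
      by_cases hi : t ≤ d i
      · simp [hy0 i hi]
      · gcongr; exact (not_le.mp hi).le
    have h3 := (Finset.sum_eq_sum_iff_of_le h2).1 (le_antisymm (Finset.sum_le_sum h2) h1)
    have h4 : y = 0 := by
      funext i
      by_cases hi : t ≤ d i
      · exact hy0 i hi
      · have := h3 i (Finset.mem_univ i)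
        by_contra hne
        have hp : 0 < ‖y i‖ ^ 2 := by
          have : 0 < ‖y i‖ := norm_pos_iff.2 hne
          positivity
        have := mul_right_cancel₀ hp.ne' this
        exact hi this.ge
    apply hT
    rw [map_zero, ← hx, hxy, h4, mulVec_zero]
  have := LinearMap.finrank_le_finrank_of_injective hS
  simpa using this

open Kronecker in
lemma count_kron {m n : Type*} [Fintype m] [DecidableEq m] [Fintype n] [DecidableEq n]
    {A : Matrix m m ℂ} {B : Matrix n n ℂ} (hA : A.IsHermitian) (hB : B.IsHermitian)
    {K : Matrix (m × n) (m × n) ℂ} (hK : K.IsHermitian) (hKe : K = A ⊗ₖ B) (s t : ℝ)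
    (hs : 0 ≤ s) (ht : 0 ≤ t) :
    Fintype.card {i // s ≤ hA.eigenvalues i} * Fintype.card {i // t ≤ hB.eigenvalues i} ≤
    Fintype.card {i // s * t ≤ hK.eigenvalues i} := by
  classical
  set U : Matrix m m ℂ := (hA.eigenvectorUnitary : Matrix m m ℂ) with hU
  set V : Matrix n n ℂ := (hB.eigenvectorUnitary : Matrix n n ℂ) with hV
  have hUU : Uᴴ * U = 1 := by
    have := Unitary.coe_star_mul_self hA.eigenvectorUnitary
    simpa [star_eq_conjTranspose] using this
  have hVV : Vᴴ * V = 1 := by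
    have := Unitary.coe_star_mul_self hB.eigenvectorUnitary
    simpa [star_eq_conjTranspose] using this
  have hA' : A = U * diagonal (fun i => (hA.eigenvalues i : ℂ)) * Uᴴ := by
    have := hA.spectral_theorem
    rw [Unitary.conjStarAlgAut_apply] at this
    exact this
  have hB' : B = V * diagonal (fun i => (hB.eigenvalues i : ℂ)) * Vᴴ := by
    have := hB.spectral_theorem
    rw [Unitary.conjStarAlgAut_apply] at this
    exact this
  have hc : K.charpoly = (diagonal (fun i : m × n =>
      ((hA.eigenvalues i.1 * hB.eigenvalues i.2 : ℝ) : ℂ))).charpoly := by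
    clear_value U V
    generalize hA.eigenvalues = a at hA' ⊢
    generalize hB.eigenvalues = b at hB' ⊢
    rw [hKe, hA', hB', mul_kronecker_mul, mul_kronecker_mul, charpoly_mul_comm, ← mul_assoc,
      ← mul_kronecker_mul, hUU, hVV, one_kronecker_one, one_mul, diagonal_kronecker_diagonal]
    congr 2
    funext i
    push_cast; rfl
  have hr := congrArg Polynomial.roots hc
  rw [hK.roots_charpoly_eq_eigenvalues, charpoly_diagonal, Polynomial.roots_prod _ _ (by
    exact Finset.prod_ne_zero_iff.2 fun i _ => Polynomial.X_sub_C_ne_zero _)] at hr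
  have hr2 := congrArg (fun S => (Multiset.map Complex.re S).countP (fun x => s * t ≤ x)) hr
  simp only [Polynomial.roots_X_sub_C, Multiset.bind_singleton, Multiset.map_map,
    Multiset.countP_map] at hr2
  have hl : Fintype.card {i // s * t ≤ hK.eigenvalues i} =
     Fintype.card {i : m × n // s * t ≤ hA.eigenvalues i.1 * hB.eigenvalues i.2} := by
    rw [Fintype.card_subtype, Fintype.card_subtype]
    simpa [Finset.card_def, Finset.filter_val] using hr2
  rw [hl, ← Fintype.card_prod]
  refine Fintype.card_le_of_injective (fun p => ⟨(p.1.1, p.2.1), ?_⟩) ?_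
  · exact mul_le_mul p.1.2 p.2.2 ht (hs.trans p.1.2)
  · rintro ⟨⟨a, _⟩, ⟨b, _⟩⟩ ⟨⟨c, _⟩, ⟨d, _⟩⟩ h
    simpa using h

/-- The one-dimensional prolate matrix. -/
noncomputable def prolate1D (N : ℕ) (W : ℝ) : Matrix (Fin N) (Fin N) ℂ :=
  fun i j => ∫ f in Set.Icc (-W) W,
    Complex.exp (2 * (Real.pi : ℂ) * Complex.I * ((f : ℂ) * (((i : ℕ) : ℂ) - ((j : ℕ) : ℂ))))

open Kronecker in
lemma prolate2D_eq (M N : ℕ) (W0 W1 : ℝ) :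
    prolate2D M N (Set.Icc (-W0) W0 ×ˢ Set.Icc (-W1) W1) = prolate1D M W0 ⊗ₖ prolate1D N W1 := by
  ext i j
  simp only [prolate2D, kroneckerMap_apply, prolate1D]
  rw [← setIntegral_prod_mul]
  rw [← Measure.volume_eq_prod]
  refine integral_congr_ae (Filter.Eventually.of_forall fun fg => ?_)
  simp only [← Complex.exp_add]
  congr 1; ring

lemma prolate1D_herm (N : ℕ) (W : ℝ) : (prolate1D N W).IsHermitian := by
  ext i j
  simp only [conjTranspose_apply, prolate1D, RCLike.star_def]
  rw [← integral_conj]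
  refine integral_congr_ae (Filter.Eventually.of_forall fun f => ?_)
  simp only [← Complex.exp_conj]
  congr 1
  simp [Complex.conj_ofNat]
  ring

/-- The point `e^{-2πif}` of the unit circle. -/
noncomputable def ee (f : ℝ) : ℂ := Complex.exp (-(2 * Real.pi * f : ℝ) * Complex.I)

lemma quad_eq (N : ℕ) (W : ℝ) (x : Fin N → ℂ) :
    (star x ⬝ᵥ prolate1D N W *ᵥ x).re =
      ∫ f in Set.Icc (-W) W, ‖∑ p, x p * ee f ^ (p : ℕ)‖ ^ 2 := by
  have key : (star x ⬝ᵥ prolate1D N W *ᵥ x) =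
      ∫ f in Set.Icc (-W) W, ((‖∑ p, x p * ee f ^ (p : ℕ)‖ ^ 2 : ℝ) : ℂ) := by
    have : ∀ f : ℝ, ((‖∑ p, x p * ee f ^ (p : ℕ)‖ ^ 2 : ℝ) : ℂ) =
      ∑ i, ∑ j, (star (x i) * x j) * Complex.exp (2 * (Real.pi : ℂ) * Complex.I * ((f : ℂ) * (((i : ℕ) : ℂ) - ((j : ℕ) : ℂ)))) := by
      intro f
      push_cast
      rw [← Complex.conj_mul', map_sum, Finset.sum_mul_sum]
      refine Finset.sum_congr rfl fun i _ => Finset.sum_congr rfl fun j _ => ?_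
      simp only [ee, map_mul, ← Complex.exp_conj, ← Complex.exp_nat_mul, RCLike.star_def]
      rw [mul_mul_mul_comm, ← Complex.exp_add]
      congr 2
      simp [Complex.conj_ofNat]
      ring
    simp_rw [this]
    rw [integral_finsetSum]
    · simp only [dotProduct, mulVec, prolate1D, Pi.star_apply]
      refine Finset.sum_congr rfl fun i _ => ?_
      rw [integral_finsetSum, Finset.mul_sum]
      · refine Finset.sum_congr rfl fun j _ => ?_
        rw [integral_const_mul]; ring
      · intro j _
        exact Continuous.integrableOn_Icc (by fun_prop)
    · intro i _
      exact Continuous.integrableOn_Icc (by fun_prop)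
  rw [key, integral_complex_ofReal, Complex.ofReal_re]

lemma prolate1D_half (N : ℕ) : prolate1D N (1 / 2) = 1 := by
  ext i j
  simp only [prolate1D]
  rw [integral_Icc_eq_integral_Ioc, ← intervalIntegral.integral_of_le (by norm_num)]
  by_cases hij : i = j
  · subst hij
    simp; norm_num
  · rw [one_apply_ne hij]
    have hne : ((i : ℕ) : ℤ) - ((j : ℕ) : ℤ) ≠ 0 := by
      intro h; apply hij; ext; omega
    set k : ℤ := ((i : ℕ) : ℤ) - ((j : ℕ) : ℤ) with hk
    have hkc : (((i : ℕ) : ℂ) - ((j : ℕ) : ℂ)) = (k : ℂ) := by rw [hk]; push_cast; rfl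
    have hc : (2 * (Real.pi : ℂ) * Complex.I * (k : ℂ)) ≠ 0 := by
      have : (k : ℂ) ≠ 0 := by exact_mod_cast hne
      simp [this, Real.pi_ne_zero]
    have : ∀ f : ℝ, 2 * (Real.pi : ℂ) * Complex.I * ((f : ℂ) * (((i : ℕ) : ℂ) - ((j : ℕ) : ℂ))) =
       (2 * (Real.pi : ℂ) * Complex.I * (k : ℂ)) * f := by intro f; rw [hkc]; ring
    simp_rw [this]
    rw [integral_exp_mul_complex hc]
    have e : Complex.exp (2 * (Real.pi : ℂ) * Complex.I * (k : ℂ) * ((1 / 2 : ℝ) : ℂ)) =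
      Complex.exp (2 * (Real.pi : ℂ) * Complex.I * (k : ℂ) * ((-(1 / 2) : ℝ) : ℂ)) := by
      rw [Complex.exp_eq_exp_iff_exists_int]
      refine ⟨k, ?_⟩
      push_cast; ring
    rw [e]; simp

lemma quad_lower (N : ℕ) (W : ℝ) (hW : W ≤ 1 / 2) (x : Fin N → ℂ) (B : ℝ) (hB : 0 ≤ B)
    (h : ∀ f : ℝ, W < |f| → |f| ≤ 1 / 2 → ‖∑ p, x p * ee f ^ (p : ℕ)‖ ^ 2 ≤ B) :
    ∑ i, ‖x i‖ ^ 2 - B ≤ (star x ⬝ᵥ prolate1D N W *ᵥ x).re := by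
  have h1 := quad_eq N (1 / 2) x
  rw [prolate1D_half, one_mulVec] at h1
  have hn : (star x ⬝ᵥ x).re = ∑ i, ‖x i‖ ^ 2 := by
    simp only [dotProduct, Pi.star_apply, RCLike.star_def, Complex.conj_mul']
    norm_cast
  rw [hn] at h1
  rw [quad_eq, h1, sub_le_iff_le_add]
  have hcont : Continuous fun f : ℝ => ‖∑ p, x p * ee f ^ (p : ℕ)‖ ^ 2 := by
    unfold ee; fun_prop
  have hi : IntegrableOn (fun f : ℝ => ‖∑ p, x p * ee f ^ (p : ℕ)‖ ^ 2) (Set.Icc (-(1/2)) (1/2)) :=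
    hcont.integrableOn_Icc
  rw [← integral_inter_add_sdiff (s := Set.Icc (-(1/2) : ℝ) (1/2)) (t := Set.Icc (-W) W)
    measurableSet_Icc hi]
  have hsub : Set.Icc (-W) W ⊆ Set.Icc (-(1/2) : ℝ) (1/2) := Set.Icc_subset_Icc (by linarith) hW
  rw [Set.inter_eq_right.2 hsub]
  gcongr
  have hvol : volume.real (Set.Icc (-(1/2) : ℝ) (1/2) \ Set.Icc (-W) W) ≤ 1 := by
    calc _ ≤ volume.real (Set.Icc (-(1/2) : ℝ) (1/2)) :=
          measureReal_mono Set.sdiff_subset (by simp)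
      _ = 1 := by simp; norm_num
  calc _ ≤ ∫ f in Set.Icc (-(1/2) : ℝ) (1/2) \ Set.Icc (-W) W, B := by
        refine setIntegral_mono_on (hi.mono_set Set.sdiff_subset) ?_
          (measurableSet_Icc.diff measurableSet_Icc) ?_
        · refine integrableOn_const ?_
          exact ((measure_mono Set.sdiff_subset).trans_lt (by simp : volume (Set.Icc (-(1/2) : ℝ) (1/2)) < ⊤)).ne
        · rintro f ⟨hf1, hf2⟩
          apply h f
          · by_contra hc
            exact hf2 (abs_le.1 (not_lt.1 hc))
          · exact abs_le.2 hf1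
    _ = volume.real (Set.Icc (-(1/2) : ℝ) (1/2) \ Set.Icc (-W) W) * B := by simp
    _ ≤ 1 * B := by gcongr
    _ = B := one_mul B

lemma ee_add (a b : ℝ) : ee (a + b) = ee a * ee b := by
  simp only [ee, ← Complex.exp_add]; congr 1; push_cast; ring

lemma ee_norm (a : ℝ) : ‖ee a‖ = 1 := by
  have := Complex.norm_exp_ofReal_mul_I (-(2 * Real.pi * a))
  simpa [ee] using this

lemma ee_zero : ee 0 = 1 := by simp [ee]

/-- Damped Dirichlet kernel. -/
noncomputable def kern (L k : ℕ) (z : ℂ) : ℂ :=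
  ((1 / L : ℂ) * ∑ l ∈ Finset.range L, z ^ l) * ((1 / 2 : ℂ) * (1 + z)) ^ k

lemma kern_one (L k : ℕ) (hL : 0 < L) : kern L k 1 = 1 := by
  have : (L : ℂ) ≠ 0 := by exact_mod_cast hL.ne'
  simp [kern, this]
  norm_num

lemma kern_root (L k : ℕ) (z : ℂ) (hz : z ^ L = 1) (hz1 : z ≠ 1) : kern L k z = 0 := by
  have : ∑ l ∈ Finset.range L, z ^ l = 0 := by
    rw [geom_sum_eq hz1, hz]; simp
  simp [kern, this]

lemma ee_half (φ : ℝ) : ‖(1 / 2 : ℂ) * (1 + ee φ)‖ = |Real.cos (Real.pi * φ)| := by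
  have h : (1 / 2 : ℂ) * (1 + ee φ) = ee (φ / 2) * ((Real.cos (Real.pi * φ) : ℝ) : ℂ) := by
    rw [Complex.ofReal_cos, Complex.cos]
    have e1 : Complex.exp (((Real.pi * φ : ℝ) : ℂ) * Complex.I) = ee (-(φ / 2)) := by
      simp only [ee]; congr 1; push_cast; ring
    have e2 : Complex.exp (-((Real.pi * φ : ℝ) : ℂ) * Complex.I) = ee (φ / 2) := by
      simp only [ee]; congr 1; push_cast; ring
    rw [e1, e2, mul_div_assoc', mul_add (ee (φ / 2)), ← ee_add, ← ee_add]
    simp [ee_zero]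
    ring
  rw [h, norm_mul, ee_norm, one_mul, Complex.norm_real, Real.norm_eq_abs]

lemma kern_bound (L k : ℕ) (hL : 0 < L) (φ δ : ℝ) (hδ : 0 ≤ δ) (h1 : δ ≤ |φ|)
    (h2 : |φ| ≤ 1 - δ) : ‖kern L k (ee φ)‖ ≤ Real.cos (Real.pi * δ) ^ k := by
  have hLr : (0 : ℝ) < L := by exact_mod_cast hL
  have hD : ‖(1 / L : ℂ) * ∑ l ∈ Finset.range L, ee φ ^ l‖ ≤ 1 := by
    rw [norm_mul]
    have : ‖∑ l ∈ Finset.range L, ee φ ^ l‖ ≤ L := by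
      refine (norm_sum_le _ _).trans ?_
      simp [ee_norm]
    calc _ ≤ ‖(1 / L : ℂ)‖ * L := by gcongr
      _ = 1 := by simp [hLr.ne']
  have hpi := Real.pi_pos
  have hc : |Real.cos (Real.pi * φ)| ≤ Real.cos (Real.pi * δ) := by
    rw [← Real.cos_abs (Real.pi * φ), abs_mul, abs_of_pos hpi, abs_le]
    constructor
    · rw [← Real.cos_pi_sub]
      apply Real.cos_le_cos_of_nonneg_of_le_pi <;> nlinarith [abs_nonneg φ]
    · apply Real.cos_le_cos_of_nonneg_of_le_pi <;> nlinarith [abs_nonneg φ]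
  rw [kern, norm_mul, norm_pow, ee_half]
  calc _ ≤ 1 * Real.cos (Real.pi * δ) ^ k := by gcongr
    _ = _ := one_mul _

open Polynomial in
/-- Polynomial version of the kernel, rotated by `v`. -/
noncomputable def kpoly (L k : ℕ) (v : ℂ) : ℂ[X] :=
  (C (1 / L : ℂ) * ∑ l ∈ Finset.range L, (C v * X) ^ l) * (C (1 / 2 : ℂ) * (1 + C v * X)) ^ k

lemma kpoly_eval (L k : ℕ) (v z : ℂ) : (kpoly L k v).eval z = kern L k (v * z) := by
  simp [kpoly, kern, Polynomial.eval_finsetSum]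

lemma kpoly_deg (L k : ℕ) (hL : 0 < L) (v : ℂ) : (kpoly L k v).natDegree ≤ (L - 1) + k := by
  have hX : (Polynomial.C v * Polynomial.X).natDegree ≤ 1 :=
    (Polynomial.natDegree_C_mul_le _ _).trans Polynomial.natDegree_X_le
  unfold kpoly
  refine Polynomial.natDegree_mul_le_of_le ?_ ?_
  · refine (Polynomial.natDegree_C_mul_le _ _).trans ?_
    refine Polynomial.natDegree_sum_le_of_forall_le _ _ fun l hl => ?_
    refine (Polynomial.natDegree_pow_le_of_le l hX).trans ?_
    have := Finset.mem_range.1 hl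
    omega
  · refine (Polynomial.natDegree_pow_le_of_le (m := 1) k ?_).trans (by omega)
    refine (Polynomial.natDegree_C_mul_le _ _).trans ?_
    refine Polynomial.natDegree_add_le_of_degree_le (by simp) hX

lemma ee_root (L : ℕ) (hL : 0 < L) (m : ℤ) : ee (m / L) ^ L = 1 := by
  have : (L : ℂ) ≠ 0 := by exact_mod_cast hL.ne'
  rw [ee, ← Complex.exp_nat_mul, Complex.exp_eq_one_iff]
  refine ⟨-m, ?_⟩
  push_cast
  field_simp

lemma ee_ne_one (L : ℕ) (hL : 0 < L) (m : ℤ) (hm : m ≠ 0) (hmL : |m| < L) : ee (m / L) ≠ 1 := by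
  have hc : (L : ℂ) ≠ 0 := by exact_mod_cast hL.ne'
  rw [ee, Ne, Complex.exp_eq_one_iff]
  rintro ⟨n, hn⟩
  have hpi : (Real.pi : ℂ) ≠ 0 := by exact_mod_cast Real.pi_ne_zero
  have h2 : (-m : ℂ) = n * L := by
    push_cast at hn
    field_simp at hn
    have h3 : (2 * (Real.pi : ℂ) * Complex.I) * (-m) = (2 * (Real.pi : ℂ) * Complex.I) * (n * L) := by
      linear_combination (2 * (Real.pi : ℂ) * Complex.I) * hn
    exact mul_left_cancel₀ (by simp [hpi]) h3
  have h4 : -m = n * L := by exact_mod_cast h2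
  have : (L : ℤ) ∣ m := ⟨-n, by linarith⟩
  exact hm (Int.eq_zero_of_abs_lt_dvd this hmL)

lemma core_count (N L k J : ℕ) (hL : 0 < L) (hLk : L + k ≤ N) (hJN : 2 * J + 1 ≤ N)
    (W δ : ℝ) (hδ : 0 < δ) (hδW : δ ≤ W) (hW : W < 1 / 2) (hJ : (J : ℝ) ≤ L * (W - δ)) :
    2 * J + 1 ≤ Fintype.card {i // 1 - N ^ 3 * Real.cos (Real.pi * δ) ^ (2 * k) ≤
      (prolate1D_herm N W).eigenvalues i} := by
  have hLr : (0 : ℝ) < L := by exact_mod_cast hL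
  set ρ := Real.cos (Real.pi * δ) with hρ
  have hρ0 : 0 ≤ ρ := by
    apply Real.cos_nonneg_of_neg_pi_div_two_le_of_le <;> nlinarith [Real.pi_pos]
  let θ : Fin (2 * J + 1) → ℝ := fun j => (((j : ℕ) : ℤ) - (J : ℤ) : ℤ) / (L : ℝ)
  have hθ : ∀ j, |θ j| ≤ W - δ := by
    intro j
    simp only [θ]
    rw [abs_div, abs_of_pos hLr, div_le_iff₀ hLr]
    have h1 : |((j : ℕ) : ℤ) - (J : ℤ)| ≤ J := by
      have := j.2
      rw [abs_le]; constructor <;> omega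
    have h2 : |((((j : ℕ) : ℤ) - (J : ℤ) : ℤ) : ℝ)| ≤ J := by exact_mod_cast h1
    linarith
  let P : (Fin (2 * J + 1) → ℂ) →ₗ[ℂ] Polynomial ℂ :=
    Fintype.linearCombination ℂ (fun j => kpoly L k (ee (-θ j)))
  have hP : ∀ c, P c = ∑ j, c j • kpoly L k (ee (-θ j)) := fun c => rfl
  have hPe : ∀ c f, (P c).eval (ee f) = ∑ j, c j * kern L k (ee (f - θ j)) := by
    intro c f
    rw [hP, Polynomial.eval_finsetSum]
    refine Finset.sum_congr rfl fun j _ => ?_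
    rw [Polynomial.eval_smul, kpoly_eval, ← ee_add, smul_eq_mul]
    congr 3; ring
  have hPd : ∀ c, (P c).natDegree < N := by
    intro c
    have : (P c).natDegree ≤ L - 1 + k := by
      rw [hP]
      refine Polynomial.natDegree_sum_le_of_forall_le _ _ fun j _ => ?_
      exact (Polynomial.natDegree_smul_le _ _).trans (kpoly_deg L k hL _)
    omega
  let T : (Fin (2 * J + 1) → ℂ) →ₗ[ℂ] (Fin N → ℂ) :=
    LinearMap.pi (fun p => (Polynomial.lcoeff ℂ (p : ℕ)) ∘ₗ P)
  have hTe : ∀ c f, ∑ p, T c p * ee f ^ (p : ℕ) = (P c).eval (ee f) := by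
    intro c f
    rw [Polynomial.eval_eq_sum_range' (hPd c), Finset.sum_range]
    rfl
  have hnode : ∀ c j, (P c).eval (ee (θ j)) = c j := by
    intro c j
    rw [hPe, Finset.sum_eq_single j]
    · rw [sub_self, ee_zero, kern_one L k hL, mul_one]
    · intro i _ hij
      have e : θ j - θ i = ((((j : ℕ) : ℤ) - ((i : ℕ) : ℤ) : ℤ) : ℝ) / (L : ℝ) := by
        simp only [θ]; push_cast; ring
      have h1 : ((j : ℕ) : ℤ) - ((i : ℕ) : ℤ) ≠ 0 := by
        intro h; apply hij; ext; omega
      have h2J : 2 * J < L := by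
        have : (2 * J : ℝ) < L := by nlinarith
        exact_mod_cast this
      have h2 : |((j : ℕ) : ℤ) - ((i : ℕ) : ℤ)| < L := by
        have := j.2
        have := i.2
        rw [abs_lt]; constructor <;> omega
      rw [e, kern_root L k _ (ee_root L hL _) (ee_ne_one L hL _ h1 h2), mul_zero]
    · simp
  have hTinj : Function.Injective T := by
    intro c c' h
    funext j
    rw [← hnode c j, ← hnode c' j, ← hTe, ← hTe, h]
  have := count_eig (prolate1D_herm N W) (1 - N ^ 3 * ρ ^ (2 * k)) T hTinj ?_
  · simpa using this
  intro c
  set E := ∑ i, ‖T c i‖ ^ 2 with hE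
  have hE0 : 0 ≤ E := by positivity
  have hcj : ∀ j, ‖c j‖ ≤ √(N * E) := by
    intro j
    apply Real.le_sqrt_of_sq_le
    rw [← hnode c j, ← hTe]
    have h1 : ‖∑ p, T c p * ee (θ j) ^ (p : ℕ)‖ ≤ ∑ p, ‖T c p‖ := by
      refine (norm_sum_le _ _).trans ?_
      simp [ee_norm]
    calc _ ≤ (∑ p, ‖T c p‖) ^ 2 := by gcongr
      _ ≤ _ := by simpa using sq_sum_le_card_mul_sum_sq (s := Finset.univ) (f := fun p => ‖T c p‖)
  have := quad_lower N W hW.le (T c) (N ^ 3 * ρ ^ (2 * k) * E) (by positivity) ?_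
  · linarith
  intro f hf1 hf2
  rw [hTe, hPe]
  have hk : ∀ j, ‖kern L k (ee (f - θ j))‖ ≤ ρ ^ k := by
    intro j
    have h1 := abs_sub_abs_le_abs_sub f (θ j)
    have h2 := abs_sub f (θ j)
    have h3 := hθ j
    apply kern_bound L k hL _ δ hδ.le <;> linarith
  have hb : ‖∑ j, c j * kern L k (ee (f - θ j))‖ ≤ N * (√(N * E) * ρ ^ k) := by
    calc _ ≤ ∑ j, ‖c j * kern L k (ee (f - θ j))‖ := norm_sum_le _ _
      _ ≤ ∑ j : Fin (2 * J + 1), (√(N * E) * ρ ^ k) := by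
        refine Finset.sum_le_sum fun j _ => ?_
        rw [norm_mul]
        exact mul_le_mul (hcj j) (hk j) (norm_nonneg _) (by positivity)
      _ = ((2 * J + 1 : ℕ) : ℝ) * (√(N * E) * ρ ^ k) := by simp
      _ ≤ _ := by gcongr
  calc _ ≤ (N * (√(N * E) * ρ ^ k)) ^ 2 := by gcongr
    _ = N ^ 2 * (√(N * E)) ^ 2 * ρ ^ (2 * k) := by ring
    _ = N ^ 3 * ρ ^ (2 * k) * E := by rw [Real.sq_sqrt (by positivity)]; ring

lemma oneD (W : ℝ) (hW : W ∈ Set.Ioo (0 : ℝ) (1 / 2)) (δ : ℝ) (hδ : δ ∈ Set.Ioo (0 : ℝ) 1) :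
    ∃ (c : ℝ) (N₀ : ℕ), 0 < c ∧ 1 ≤ N₀ ∧ ∀ N : ℕ, N₀ ≤ N →
      2 * N * W * (1 - δ) < (Fintype.card {i // 1 - Real.exp (-c * N) ≤
        (prolate1D_herm N W).eigenvalues i} : ℝ) := by
  obtain ⟨hW0, hW1⟩ := hW
  obtain ⟨hδ0, hδ1⟩ := hδ
  set d := W * δ / 4 with hd
  have hd0 : 0 < d := by positivity
  have hdW : d ≤ W / 4 := by rw [hd]; nlinarith
  set ρ := Real.cos (Real.pi * d) with hρ
  have hpi := Real.pi_pos
  have hρ0 : 0 < ρ := by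
    apply Real.cos_pos_of_mem_Ioo; constructor <;> nlinarith
  have hρ1 : ρ < 1 := by
    rw [hρ, ← Real.cos_zero]
    apply Real.cos_lt_cos_of_nonneg_of_le_pi <;> nlinarith
  set β := -Real.log ρ with hβ
  have hβ0 : 0 < β := by have := Real.log_neg hρ0 hρ1; linarith
  set a := δ / 4 with ha
  have ha0 : 0 < a := by positivity
  have hlim : Filter.Tendsto (fun N : ℕ => ((a * β) * (N : ℝ)) ^ 3 * Real.exp (-((a * β) * N)))
      Filter.atTop (nhds 0) :=
    (Real.tendsto_pow_mul_exp_neg_atTop_nhds_zero 3).comp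
      (tendsto_natCast_atTop_atTop.const_mul_atTop (by positivity))
  have hev := hlim.eventually (gt_mem_nhds (show (0 : ℝ) < (a * β) ^ 3 by positivity))
  obtain ⟨N₁, hN₁⟩ := Filter.eventually_atTop.1 hev
  refine ⟨a * β, max N₁ (max 2 ⌈2 / (W * δ)⌉₊), by positivity, by simp, ?_⟩
  intro N hN
  have hNN1 : N₁ ≤ N := (le_max_left _ _).trans hN
  have hN2 : 2 ≤ N := (le_max_left _ _).trans ((le_max_right _ _).trans hN)
  have hN3 : 2 / (W * δ) ≤ N := by
    have := (le_max_right _ _).trans ((le_max_right _ _).trans hN)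
    exact (Nat.le_ceil _).trans (by exact_mod_cast this)
  have hN2r : (2 : ℝ) ≤ N := by exact_mod_cast hN2
  rw [div_le_iff₀ (by positivity)] at hN3
  set k := ⌈a * N⌉₊ with hk
  have hk1 : a * N ≤ k := Nat.le_ceil _
  have hk2 : (k : ℝ) < a * N + 1 := Nat.ceil_lt_add_one (by positivity)
  have hk0 : 0 < k := Nat.ceil_pos.2 (by positivity)
  have hkN : k < N := by
    have : (k : ℝ) < N := by
      rw [ha] at hk2; nlinarith
    exact_mod_cast this
  obtain ⟨L, hL⟩ : ∃ L, N = L + k := ⟨N - k, by omega⟩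
  have hL0 : 0 < L := by omega
  have hLr : (N : ℝ) = L + k := by exact_mod_cast hL
  have hLpos : (0 : ℝ) < L := by exact_mod_cast hL0
  set J := ⌊L * (W - d)⌋₊ with hJ
  have hnn : 0 ≤ L * (W - d) := by apply mul_nonneg hLpos.le; linarith
  have hJ1 : (J : ℝ) ≤ L * (W - d) := Nat.floor_le hnn
  have hJ2 : L * (W - d) < J + 1 := Nat.lt_floor_add_one _
  have hJN : 2 * J + 1 ≤ N := by
    have : 2 * J < L := by
      have : (2 * J : ℝ) < L := by nlinarith
      exact_mod_cast this
    omega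
  have hmain := core_count N L k J hL0 hL.ge hJN W d hd0 (by linarith) hW1 hJ1
  rw [← hρ] at hmain
  have hexp : (N : ℝ) ^ 3 * ρ ^ (2 * k) ≤ Real.exp (-(a * β) * N) := by
    have h1 := hN₁ N hNN1
    have h2 : (N : ℝ) ^ 3 * Real.exp (-((a * β) * N)) ≤ 1 := by
      have hp : 0 < (a * β) ^ 3 := by positivity
      rw [mul_pow, mul_assoc] at h1
      exact (lt_of_mul_lt_mul_left (by linarith) hp.le : (N : ℝ) ^ 3 * Real.exp (-((a * β) * N)) < 1).le
    have h3 : ρ ^ (2 * k) = Real.exp (-(β * (2 * k))) := by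
      rw [hβ, ← Real.exp_log (pow_pos hρ0 (2 * k)), Real.log_pow]
      congr 1; push_cast; ring
    have h4 : ρ ^ (2 * k) ≤ Real.exp (-((a * β) * N)) * Real.exp (-((a * β) * N)) := by
      rw [h3, ← Real.exp_add]
      apply Real.exp_le_exp.2
      nlinarith
    calc (N : ℝ) ^ 3 * ρ ^ (2 * k) ≤ N ^ 3 * (Real.exp (-((a * β) * N)) * Real.exp (-((a * β) * N))) := by
          gcongr
      _ = (N ^ 3 * Real.exp (-((a * β) * N))) * Real.exp (-((a * β) * N)) := by ring
      _ ≤ 1 * Real.exp (-((a * β) * N)) := by gcongr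
      _ = _ := by rw [one_mul, neg_mul]
  have hcard : 2 * J + 1 ≤ Fintype.card {i // 1 - Real.exp (-(a * β) * N) ≤
        (prolate1D_herm N W).eigenvalues i} := by
    refine hmain.trans (Fintype.card_subtype_mono _ _ ?_)
    intro i hi
    exact le_trans (by linarith) hi
  have hcr : (2 * J + 1 : ℝ) ≤ (Fintype.card {i // 1 - Real.exp (-(a * β) * N) ≤
        (prolate1D_herm N W).eigenvalues i} : ℝ) := by exact_mod_cast hcard
  refine lt_of_lt_of_le ?_ hcr
  have hL2 : (1 - a) * N - 1 ≤ L := by nlinarith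
  have h5 : ((1 - a) * N - 1) * (W - d) ≤ L * (W - d) :=
    mul_le_mul_of_nonneg_right hL2 (by linarith)
  have h6 : W - d = W * (1 - a) := by rw [hd, ha]; ring
  have h7 : W * (1 - δ / 2) ≤ (1 - a) * (W - d) := by
    rw [h6, ha]; nlinarith [mul_pos hW0 (mul_pos hδ0 hδ0)]
  have h8 : N * (W * (1 - δ / 2)) ≤ N * ((1 - a) * (W - d)) := by gcongr
  nlinarith

theorem prolate2D_eigenvalue_cluster_near_one
    (W0 W1 : ℝ) (hW0 : W0 ∈ Set.Ioo (0 : ℝ) (1 / 2)) (hW1 : W1 ∈ Set.Ioo (0 : ℝ) (1 / 2))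
    (ε : ℝ) (hε : ε ∈ Set.Ioo (0 : ℝ) 1) :
    ∃ (Cbar₁ Cbar₂ : ℝ) (Mbar₁ Nbar₁ : ℕ), 0 < Cbar₁ ∧ 0 < Cbar₂ ∧ 1 ≤ Mbar₁ ∧ 1 ≤ Nbar₁ ∧
      ∀ (M N : ℕ), Mbar₁ ≤ M → Nbar₁ ≤ N →
        ∀ (hA : (prolate2D M N (Set.Icc (-W0) W0 ×ˢ Set.Icc (-W1) W1)).IsHermitian)
          (μ : Fin (M * N) → ℝ),
          Antitone μ →
          (∃ e : (Fin M × Fin N) ≃ Fin (M * N), hA.eigenvalues = μ ∘ e) →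
          ∀ p : Fin (M * N), (p : ℕ) ≤ ⌊4 * (M : ℝ) * (N : ℝ) * W0 * W1 * (1 - ε)⌋₊ →
            1 - μ p ≤ Cbar₁ * Real.exp (-Cbar₂ * min (M : ℝ) (N : ℝ)) := by
  obtain ⟨hε0, hε1⟩ := hε
  have hδ : ε / 2 ∈ Set.Ioo (0 : ℝ) 1 := ⟨by linarith, by linarith⟩
  obtain ⟨c0, M₀, hc0, hM₀, h0⟩ := oneD W0 hW0 (ε / 2) hδ
  obtain ⟨c1, N₀, hc1, hN₀, h1⟩ := oneD W1 hW1 (ε / 2) hδ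
  refine ⟨2, min c0 c1, M₀, N₀, by norm_num, lt_min hc0 hc1, hM₀, hN₀, ?_⟩
  intro M N hM hN hA μ hμ ⟨e, he⟩ p hp
  specialize h0 M hM
  specialize h1 N hN
  set s := 1 - Real.exp (-c0 * M) with hs
  set t := 1 - Real.exp (-c1 * N) with ht
  have hMr : (0 : ℝ) ≤ M := by positivity
  have hNr : (0 : ℝ) ≤ N := by positivity
  have hs0 : 0 ≤ s := by
    have : Real.exp (-c0 * M) ≤ 1 := Real.exp_le_one_iff.2 (by nlinarith)
    linarith
  have ht0 : 0 ≤ t := by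
    have : Real.exp (-c1 * N) ≤ 1 := Real.exp_le_one_iff.2 (by nlinarith)
    linarith
  have hk := count_kron (prolate1D_herm M W0) (prolate1D_herm N W1) hA (prolate2D_eq M N W0 W1)
    s t hs0 ht0
  set K := Fintype.card {i // s * t ≤ hA.eigenvalues i} with hK
  have hpK : (p : ℕ) < K := by
    have hW00 := hW0.1
    have hW10 := hW1.1
    have hkr := (Nat.cast_le (α := ℝ)).2 hk
    rw [Nat.cast_mul] at hkr
    have hp1 : (p : ℝ) ≤ 4 * (M : ℝ) * (N : ℝ) * W0 * W1 * (1 - ε) := by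
      have h1ε : 0 ≤ 1 - ε := by linarith
      exact (Nat.cast_le.2 hp).trans (Nat.floor_le (by positivity))
    have h1ε : 0 ≤ 1 - ε / 2 := by linarith
    have hprod := mul_lt_mul'' h0 h1 (by positivity) (by positivity)
    have h9 : 4 * (M : ℝ) * (N : ℝ) * W0 * W1 * (1 - ε) ≤
        2 * M * W0 * (1 - ε / 2) * (2 * N * W1 * (1 - ε / 2)) := by
      have : 0 ≤ M * N * W0 * W1 * ε ^ 2 := by positivity
      nlinarith
    have : (p : ℝ) < K := by linarith
    exact_mod_cast this
  have hμp : s * t ≤ μ p := by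
    by_contra hcon
    have hinj : K ≤ Fintype.card (Fin p) := by
      refine Fintype.card_le_of_injective
        (fun i : {i // s * t ≤ hA.eigenvalues i} => (⟨(e i.1 : ℕ), ?_⟩ : Fin p)) ?_
      · by_contra hge
        have h2 : p ≤ e i.1 := by
          rw [Fin.le_def]; omega
        have h3 := i.2
        have h4 : hA.eigenvalues i.1 = μ (e i.1) := congrFun he i.1
        rw [h4] at h3
        exact hcon (h3.trans (hμ h2))
      · intro i j hij
        apply Subtype.ext
        apply e.injective
        apply Fin.ext
        simpa using hij
    rw [Fintype.card_fin] at hinj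
    omega
  have hm0 : Real.exp (-c0 * M) ≤ Real.exp (-(min c0 c1) * min (M : ℝ) N) := by
    apply Real.exp_le_exp.2
    have := mul_le_mul (min_le_left c0 c1) (min_le_left (M : ℝ) N) (le_min hMr hNr) hc0.le
    linarith
  have hm1 : Real.exp (-c1 * N) ≤ Real.exp (-(min c0 c1) * min (M : ℝ) N) := by
    apply Real.exp_le_exp.2
    have := mul_le_mul (min_le_right c0 c1) (min_le_right (M : ℝ) N) (le_min hMr hNr) hc1.le
    linarith
  have hpp : 0 ≤ Real.exp (-c0 * M) * Real.exp (-c1 * N) := by positivity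
  have hst : s * t = 1 - Real.exp (-c0 * M) - Real.exp (-c1 * N) +
      Real.exp (-c0 * M) * Real.exp (-c1 * N) := by rw [hs, ht]; ring
  linarith
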